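/- Let D₀ be the distribution of n i.i.d. samples X₁, …, Xₙ ~ N(0, I_d) on (ℝ^d)^n, and let D₁ be the distribution of (X₁, …, Xₙ) obtained by first drawing a random vector v ~ N(0, (1/d)·I_d) and then, conditionally on v, drawing each X_i i.i.d. from the mixture (1−ε)·N(αv, I_d) + ε·N(−((1−ε)/ε)·αv, I_d). Then there exists an absolute constant c > 0 such that if n = c·dε³/α⁴, α ≥ ε, and c·dε³/α⁴ ≥ √d/α², then the total variation distance satisfies d_TV(D₀, D₁) ≤ 0.1. -/

import Mathlib

open MeasureTheory ProbabilityTheory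

/-- Total variation distance between two measures: `sup_A |P(A) − Q(A)|` over measurable `A`. -/
noncomputable def tvDist {Ω : Type*} [MeasurableSpace Ω] (P Q : Measure Ω) : ℝ :=
  sSup {x : ℝ | ∃ A : Set Ω, MeasurableSet A ∧ x = |(P A).toReal - (Q A).toReal|}

/-- The Gaussian measure `N(μ, I_d)` on `ℝ^d`, as a product of one-dimensional Gaussians. -/
noncomputable def gaussPi (d : ℕ) (μ : Fin d → ℝ) : Measure (Fin d → ℝ) :=
  Measure.pi fun j => gaussianReal (μ j) 1

/-!
Conditionally on `v`, a sample is `N(w • v, I)` with a random label `w` of mean zero. Given `v` and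
the vector `W` of labels, the likelihood ratio of the `n` samples against `N(0, I)` is explicit, and
the ratios of `(v, W)` and `(v', W')` have inner product `exp (⟨v, v'⟩ ⟨W, W'⟩)`. The second moment
of the mixture's likelihood ratio is the average of this quantity. It is averaged over typical
`(v, W)` only, since rare atypical draws could make the full average blow up. Averaging over the
centred labels gives at most `exp (a ⟨v, v'⟩ ^ 2)` with `a` of order `n α⁴ / ε³`; given `v`,
`⟨v, v'⟩` is a centred Gaussian of variance about `1 / d`, so the truncated second moment is
`1 + O(n α⁴ / (d ε³))`.
-/

open scoped ENNReal NNReal Matrix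

lemma tvDist_le_of_forall_measureReal_le {Ω : Type*} [MeasurableSpace Ω] {P Q : Measure Ω}
    [IsProbabilityMeasure P] [IsProbabilityMeasure Q] {δ : ℝ}
    (h : ∀ A, MeasurableSet A → P.real A ≤ Q.real A + δ) : tvDist P Q ≤ δ := by
  refine csSup_le ⟨_, ∅, .empty, rfl⟩ ?_
  rintro _ ⟨A, hA, rfl⟩
  have hAc := h Aᶜ hA.compl
  rw [probReal_compl_eq_one_sub hA, probReal_compl_eq_one_sub hA] at hAc
  exact abs_sub_le_iff.2 ⟨sub_le_iff_le_add'.2 (h A hA), by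
    change Q.real A - P.real A ≤ δ
    linarith⟩

lemma one_sub_sq_add_two_mul_le (a : ℝ≥0∞) : (1 - a) ^ 2 + 2 * a ≤ 1 + a ^ 2 := by
  rcases le_total a 1 with ha | ha
  · obtain ⟨b, hb⟩ := exists_add_of_le ha
    have hba : 1 - a = b :=
      ENNReal.sub_eq_of_eq_add_rev (ne_top_of_le_ne_top ENNReal.one_ne_top ha) hb
    calc (1 - a) ^ 2 + 2 * a = b ^ 2 + 2 * a * (a + b) := by rw [hba, ← hb, mul_one]
      _ = (a + b) ^ 2 + a ^ 2 := by ring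
      _ ≤ 1 + a ^ 2 := by rw [← hb, one_pow]
  · obtain ⟨b, rfl⟩ := exists_add_of_le ha
    rw [tsub_eq_zero_of_le ha]
    calc (0 : ℝ≥0∞) ^ 2 + 2 * (1 + b) ≤ 2 * (1 + b) + b ^ 2 := by simp
      _ = 1 + (1 + b) ^ 2 := by ring

lemma lintegral_le_of_lintegral_sq_le {Ω : Type*} [MeasurableSpace Ω] {P : Measure Ω}
    [IsProbabilityMeasure P] {f : Ω → ℝ≥0∞} (hf : Measurable f) {C : ℝ≥0∞}
    (h : ∫⁻ x, f x ^ 2 ∂P ≤ C ^ 2) : ∫⁻ x, f x ∂P ≤ C := by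
  have hmono := eLpNorm_le_eLpNorm_of_exponent_le (p := 1) (q := 2) one_le_two
    (hf.aestronglyMeasurable (μ := P))
  rw [eLpNorm_one_eq_lintegral_enorm, eLpNorm_eq_lintegral_rpow_enorm_toReal two_ne_zero
    ENNReal.ofNat_ne_top] at hmono
  simp only [enorm_eq_self, ENNReal.toReal_ofNat, ENNReal.rpow_ofNat] at hmono
  refine hmono.trans ((ENNReal.rpow_le_rpow h (by norm_num)).trans_eq ?_)
  rw [← ENNReal.rpow_natCast, ← ENNReal.rpow_mul]
  norm_num

-- The last hypothesis is `∫ (1 - g)² ≤ δ²`, expanded so that no subtraction occurs in `ℝ≥0∞`.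
lemma tvDist_withDensity_le {Ω : Type*} [MeasurableSpace Ω] {P : Measure Ω}
    [IsProbabilityMeasure P] {f g : Ω → ℝ≥0∞} (hg : Measurable g)
    (hgf : g ≤ f) (hf1 : ∫⁻ x, f x ∂P = 1) {δ : ℝ} (hδ : 0 ≤ δ)
    (h : 1 + ∫⁻ x, g x ^ 2 ∂P ≤ ENNReal.ofReal (δ ^ 2) + 2 * ∫⁻ x, g x ∂P) :
    tvDist P (P.withDensity f) ≤ δ := by
  have : IsProbabilityMeasure (P.withDensity f) := ⟨by simp [hf1]⟩
  have hg_ne_top : ∫⁻ x, g x ∂P ≠ ∞ :=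
    ((lintegral_mono hgf).trans_lt (hf1 ▸ ENNReal.one_lt_top)).ne
  have hsq : ∫⁻ x, (1 - g x) ^ 2 ∂P ≤ ENNReal.ofReal (δ ^ 2) := by
    refine (ENNReal.add_le_add_iff_right (ENNReal.mul_ne_top ENNReal.ofNat_ne_top hg_ne_top)).1
      (le_trans ?_ h)
    calc ∫⁻ x, (1 - g x) ^ 2 ∂P + 2 * ∫⁻ x, g x ∂P
        = ∫⁻ x, (1 - g x) ^ 2 + 2 * g x ∂P := by
          rw [← lintegral_const_mul _ hg, ← lintegral_add_right _ (hg.const_mul 2)]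
      _ ≤ ∫⁻ x, 1 + g x ^ 2 ∂P := lintegral_mono fun x ↦ one_sub_sq_add_two_mul_le (g x)
      _ = 1 + ∫⁻ x, g x ^ 2 ∂P := by simp [lintegral_add_left]
  have hL1 : ∫⁻ x, 1 - g x ∂P ≤ ENNReal.ofReal δ :=
    lintegral_le_of_lintegral_sq_le (by fun_prop) (by rwa [← ENNReal.ofReal_pow hδ])
  refine tvDist_le_of_forall_measureReal_le fun A hA ↦ ?_
  have hPA : P A ≤ P.withDensity f A + ENNReal.ofReal δ := calc
    P A = ∫⁻ _ in A, 1 ∂P := by simp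
    _ ≤ ∫⁻ x in A, f x + (1 - g x) ∂P := by
      gcongr with x
      exact le_add_tsub.trans (add_le_add_left (hgf x) _)
    _ = P.withDensity f A + ∫⁻ x in A, (1 - g x) ∂P := by
      rw [lintegral_add_right _ (by fun_prop), withDensity_apply _ hA]
    _ ≤ P.withDensity f A + ENNReal.ofReal δ := by
      gcongr
      exact (setLIntegral_le_lintegral _ _).trans hL1
  rw [← ofReal_measureReal, ← ofReal_measureReal, ← ENNReal.ofReal_add (by positivity) hδ] at hPA
  exact (ENNReal.ofReal_le_ofReal_iff (by positivity)).1 hPA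

section SecondMoment

variable {Ω Θ : Type*} [MeasurableSpace Ω] [MeasurableSpace Θ] {P : Measure Ω}
  {ρ : Measure Θ} {L : Θ → Ω → ℝ≥0∞}

lemma bind_withDensity [SFinite P] [SFinite ρ] (hL : Measurable (Function.uncurry L)) :
    ρ.bind (fun θ ↦ P.withDensity (L θ)) = P.withDensity fun x ↦ ∫⁻ θ, L θ x ∂ρ := by
  ext A hA
  rw [Measure.bind_apply hA (measurable_withDensity hL).aemeasurable, withDensity_apply _ hA]
  simp_rw [withDensity_apply _ hA]
  exact lintegral_lintegral_swap hL.aemeasurable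

lemma lintegral_sq_lintegral [SFinite P] [SFinite ρ] (hL : Measurable (Function.uncurry L)) :
    ∫⁻ x, (∫⁻ θ, L θ x ∂ρ) ^ 2 ∂P = ∫⁻ θ, ∫⁻ θ', ∫⁻ x, L θ x * L θ' x ∂P ∂ρ ∂ρ := by
  have hLx (x : Ω) : Measurable fun θ ↦ L θ x := by fun_prop
  calc ∫⁻ x, (∫⁻ θ, L θ x ∂ρ) ^ 2 ∂P
      = ∫⁻ x, ∫⁻ θ, ∫⁻ θ', L θ x * L θ' x ∂ρ ∂ρ ∂P := by
        simp_rw [sq, ← lintegral_mul_const _ (hLx _), ← lintegral_const_mul _ (hLx _)]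
    _ = ∫⁻ θ, ∫⁻ x, ∫⁻ θ', L θ x * L θ' x ∂ρ ∂P ∂ρ := lintegral_lintegral_swap (by fun_prop)
    _ = ∫⁻ θ, ∫⁻ θ', ∫⁻ x, L θ x * L θ' x ∂P ∂ρ ∂ρ :=
        lintegral_congr fun θ ↦ lintegral_lintegral_swap (by fun_prop)

-- Truncating the prior to `G` only decreases the mixture density, so its second moment need only
-- be controlled on `G`.
lemma tvDist_withDensity_mixture_le [IsProbabilityMeasure P] [IsProbabilityMeasure ρ]
    (hL : Measurable (Function.uncurry L)) (hL1 : ∀ θ, ∫⁻ x, L θ x ∂P = 1) (G : Set Θ) {δ : ℝ}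
    (hδ : 0 ≤ δ)
    (h : 1 + ∫⁻ θ in G, ∫⁻ θ' in G, ∫⁻ x, L θ x * L θ' x ∂P ∂ρ ∂ρ
      ≤ ENNReal.ofReal (δ ^ 2) + 2 * ρ G) :
    tvDist P (P.withDensity fun x ↦ ∫⁻ θ, L θ x ∂ρ) ≤ δ := by
  have hmass (ρ' : Measure Θ) [SFinite ρ'] : ∫⁻ x, ∫⁻ θ, L θ x ∂ρ' ∂P = ρ' Set.univ := by
    rw [lintegral_lintegral_swap (by fun_prop)]
    simp [hL1]
  refine tvDist_withDensity_le (g := fun x ↦ ∫⁻ θ in G, L θ x ∂ρ)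
    (by fun_prop) (fun x ↦ setLIntegral_le_lintegral _ _) (by rw [hmass, measure_univ]) hδ ?_
  rwa [hmass, Measure.restrict_apply_univ, lintegral_sq_lintegral hL]

end SecondMoment

section Product

variable {ι : Type*} [Fintype ι]

lemma lintegral_pi_prod {X : ι → Type*} [∀ i, MeasurableSpace (X i)] {μ : ∀ i, Measure (X i)}
    [∀ i, IsProbabilityMeasure (μ i)] {f : ∀ i, X i → ℝ≥0∞} (hf : ∀ i, Measurable (f i)) :
    ∫⁻ x, ∏ i, f i (x i) ∂Measure.pi μ = ∏ i, ∫⁻ y, f i y ∂μ i := by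
  have hind : iIndepFun (fun i (x : ∀ i, X i) ↦ f i (x i)) (Measure.pi μ) :=
    iIndepFun_pi fun i ↦ (hf i).aemeasurable
  rw [lintegral_prod_eq_prod_lintegral_of_indepFun _ _ hind
    fun i ↦ (hf i).comp (measurable_pi_apply i)]
  exact Finset.prod_congr rfl fun i _ ↦ (measurePreserving_eval μ i).lintegral_comp (hf i)

lemma pi_withDensity {X : ι → Type*} [∀ i, MeasurableSpace (X i)] {μ : ∀ i, Measure (X i)}
    [∀ i, IsProbabilityMeasure (μ i)] {f : ∀ i, X i → ℝ≥0∞} (hf : ∀ i, Measurable (f i))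
    [∀ i, SigmaFinite ((μ i).withDensity (f i))] :
    Measure.pi (fun i ↦ (μ i).withDensity (f i))
      = (Measure.pi μ).withDensity fun x ↦ ∏ i, f i (x i) := by
  refine Measure.pi_eq fun s hs ↦ ?_
  have hind (x : ∀ i, X i) : (Set.univ.pi s).indicator (fun x ↦ ∏ i, f i (x i)) x
      = ∏ i, (s i).indicator (f i) (x i) := by
    classical
    simp only [Set.indicator_apply, Finset.prod_ite_zero, Set.mem_univ_pi, Finset.mem_univ,
      true_imp_iff]
  rw [withDensity_apply _ (.univ_pi hs), ← lintegral_indicator (.univ_pi hs)]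
  simp_rw [hind, withDensity_apply _ (hs _), ← lintegral_indicator (hs _)]
  exact lintegral_pi_prod fun i ↦ (hf i).indicator (hs i)

lemma lintegral_prod_lintegral_prod {α β : Type*} [MeasurableSpace α] [MeasurableSpace β]
    {μ : Measure α} [SFinite μ] {ν : Measure β} [SFinite ν] {F : α × β → α × β → ℝ≥0∞}
    (hF : Measurable (Function.uncurry F)) :
    ∫⁻ p, ∫⁻ q, F p q ∂μ.prod ν ∂μ.prod ν
      = ∫⁻ a, ∫⁻ a', ∫⁻ b, ∫⁻ b', F (a, b) (a', b') ∂ν ∂ν ∂μ ∂μ := by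
  rw [lintegral_prod _ (by fun_prop)]
  refine lintegral_congr fun a ↦ ?_
  calc ∫⁻ b, ∫⁻ q, F (a, b) q ∂μ.prod ν ∂ν
      = ∫⁻ b, ∫⁻ a', ∫⁻ b', F (a, b) (a', b') ∂ν ∂μ ∂ν :=
        lintegral_congr fun b ↦ lintegral_prod _ (by fun_prop)
    _ = ∫⁻ a', ∫⁻ b, ∫⁻ b', F (a, b) (a', b') ∂ν ∂ν ∂μ := lintegral_lintegral_swap (by fun_prop)

lemma ofReal_exp_sum (f : ι → ℝ) :
    ENNReal.ofReal (Real.exp (∑ i, f i)) = ∏ i, ENNReal.ofReal (Real.exp (f i)) := by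
  rw [Real.exp_sum, ENNReal.ofReal_prod_of_nonneg fun _ _ ↦ (Real.exp_pos _).le]

@[fun_prop]
lemma measurable_dotProduct {Ω : Type*} [MeasurableSpace Ω] {f g : Ω → ι → ℝ} (hf : Measurable f)
    (hg : Measurable g) : Measurable fun ω ↦ f ω ⬝ᵥ g ω := by
  unfold dotProduct
  fun_prop

lemma dotProduct_self_nonneg (x : ι → ℝ) : 0 ≤ x ⬝ᵥ x :=
  Finset.sum_nonneg fun i _ ↦ mul_self_nonneg (x i)

/-- The closed Euclidean ball of squared radius `r` in `ℝ^ι`, on which Mathlib's norm is the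
supremum norm. -/
def sqBall (ι : Type*) [Fintype ι] (r : ℝ) : Set (ι → ℝ) := {x | x ⬝ᵥ x ≤ r}

lemma measurableSet_sqBall (r : ℝ) : MeasurableSet (sqBall ι r) :=
  measurableSet_le (by fun_prop) measurable_const

lemma abs_dotProduct_le_of_mem_sqBall {r : ℝ} {x y : ι → ℝ} (hx : x ∈ sqBall ι r)
    (hy : y ∈ sqBall ι r) : |x ⬝ᵥ y| ≤ r := by
  have hx : x ⬝ᵥ x ≤ r := hx
  have hy : y ⬝ᵥ y ≤ r := hy
  have hadd : 0 ≤ (x + y) ⬝ᵥ (x + y) := dotProduct_self_nonneg _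
  have hsub : 0 ≤ (x - y) ⬝ᵥ (x - y) := dotProduct_self_nonneg _
  simp only [add_dotProduct, dotProduct_add, sub_dotProduct, dotProduct_sub,
    dotProduct_comm y x] at hadd hsub
  exact abs_le.2 ⟨by linarith, by linarith⟩

lemma integrable_eval_mul_self_pi {μ : Measure ℝ} [IsProbabilityMeasure μ]
    (hμ : Integrable (fun x ↦ x ^ 2) μ) (i : ι) :
    Integrable (fun x : ι → ℝ ↦ x i * x i) (Measure.pi fun _ ↦ μ) := by
  simpa only [Function.comp_def, sq]
    using (measurePreserving_eval (fun _ : ι ↦ μ) i).integrable_comp_of_integrable hμ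

lemma integrable_dotProduct_self_pi {μ : Measure ℝ} [IsProbabilityMeasure μ]
    (hμ : Integrable (fun x ↦ x ^ 2) μ) :
    Integrable (fun x : ι → ℝ ↦ x ⬝ᵥ x) (Measure.pi fun _ ↦ μ) :=
  integrable_finsetSum _ fun i _ ↦ integrable_eval_mul_self_pi hμ i

lemma integral_dotProduct_self_pi {μ : Measure ℝ} [IsProbabilityMeasure μ]
    (hμ : Integrable (fun x ↦ x ^ 2) μ) :
    ∫ x : ι → ℝ, x ⬝ᵥ x ∂(Measure.pi fun _ ↦ μ) = Fintype.card ι * ∫ x, x ^ 2 ∂μ := by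
  calc ∫ x : ι → ℝ, x ⬝ᵥ x ∂(Measure.pi fun _ ↦ μ)
      = ∑ i, ∫ x : ι → ℝ, x i * x i ∂(Measure.pi fun _ ↦ μ) :=
        integral_finsetSum _ fun i _ ↦ integrable_eval_mul_self_pi hμ i
    _ = ∑ _ : ι, ∫ y, y ^ 2 ∂μ := by
        refine Finset.sum_congr rfl fun i _ ↦ ?_
        simp_rw [← sq]
        exact integral_comp_eval (μ := fun _ ↦ μ) (f := fun y : ℝ ↦ y ^ 2) (by fun_prop)
    _ = Fintype.card ι * ∫ x, x ^ 2 ∂μ := by simp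

lemma one_sub_inv_le_measureReal_sqBall {P : Measure (ι → ℝ)} [IsProbabilityMeasure P]
    (hP : Integrable (fun x ↦ x ⬝ᵥ x) P) {M : ℝ} (hM : 0 < M) :
    1 - M⁻¹ ≤ P.real (sqBall ι (M * ∫ x, x ⬝ᵥ x ∂P)) := by
  set m := ∫ x, x ⬝ᵥ x ∂P with hm_def
  have hnonneg : 0 ≤ᵐ[P] fun x ↦ x ⬝ᵥ x := .of_forall dotProduct_self_nonneg
  suffices hcompl : P.real (sqBall ι (M * m))ᶜ ≤ M⁻¹ by
    rw [probReal_compl_eq_one_sub (measurableSet_sqBall _)] at hcompl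
    linarith
  rcases (integral_nonneg_of_ae hnonneg).eq_or_lt with hm | hm
  -- Markov's inequality says nothing at level `0`, where `x ⬝ᵥ x` vanishes almost surely instead.
  · have hball : sqBall ι (M * m) ∈ ae P := by
      filter_upwards [(integral_eq_zero_iff_of_nonneg_ae hnonneg hP).1 hm.symm] with x hx
      exact hx.trans_le (by simp [hm_def, ← hm])
    rw [measureReal_def, mem_ae_iff.1 hball]
    simpa using hM.le
  · have hmarkov := mul_meas_ge_le_integral_of_nonneg hnonneg hP (M * m)
    have hsub : (sqBall ι (M * m))ᶜ ⊆ {x | M * m ≤ x ⬝ᵥ x} :=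
      fun x hx ↦ (not_le.1 (show ¬x ⬝ᵥ x ≤ M * m from hx)).le
    have hle := mul_le_mul_of_nonneg_left (measureReal_mono (μ := P) hsub) (mul_pos hM hm).le
    refine le_of_mul_le_mul_left ?_ (mul_pos hM hm)
    calc M * m * P.real (sqBall ι (M * m))ᶜ ≤ m := hle.trans hmarkov
      _ = M * m * M⁻¹ := by field_simp

end Product

section GaussianShift

variable {ι κ : Type*} [Fintype ι] [Fintype κ] {d : ℕ}

/-- The density of `N(m, I)` with respect to `N(0, I)`. -/
noncomputable def gaussShiftDensity (m x : ι → ℝ) : ℝ≥0∞ :=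
  ENNReal.ofReal (Real.exp (m ⬝ᵥ x - m ⬝ᵥ m / 2))

@[fun_prop]
lemma measurable_gaussShiftDensity {Ω : Type*} [MeasurableSpace Ω] {m x : Ω → ι → ℝ}
    (hm : Measurable m) (hx : Measurable x) :
    Measurable fun ω ↦ gaussShiftDensity (m ω) (x ω) := by
  unfold gaussShiftDensity
  fun_prop

lemma gaussShiftDensity_mul (m m' x : ι → ℝ) :
    gaussShiftDensity m x * gaussShiftDensity m' x
      = ENNReal.ofReal (Real.exp (m ⬝ᵥ m')) * gaussShiftDensity (m + m') x := by
  simp only [gaussShiftDensity]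
  rw [← ENNReal.ofReal_mul (by positivity), ← ENNReal.ofReal_mul (by positivity),
    ← Real.exp_add, ← Real.exp_add]
  simp only [add_dotProduct, dotProduct_add, dotProduct_comm m' m]
  congr 2
  ring

lemma gaussShiftDensity_eq_prod (m x : ι → ℝ) :
    gaussShiftDensity m x = ∏ i, ENNReal.ofReal (Real.exp (m i * x i - m i ^ 2 / 2)) := by
  rw [← ofReal_exp_sum, gaussShiftDensity, Finset.sum_sub_distrib, ← Finset.sum_div]
  simp only [dotProduct, sq]

lemma gaussianReal_eq_withDensity (m : ℝ) :
    gaussianReal m 1 = (gaussianReal 0 1).withDensity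
      fun x ↦ ENNReal.ofReal (Real.exp (m * x - m ^ 2 / 2)) := by
  rw [gaussianReal_of_var_ne_zero _ one_ne_zero, gaussianReal_of_var_ne_zero _ one_ne_zero,
    ← withDensity_mul _ (measurable_gaussianPDF 0 1) (by fun_prop)]
  congr 1
  ext x
  simp only [Pi.mul_apply, gaussianPDF, gaussianPDFReal]
  rw [← ENNReal.ofReal_mul (by positivity), mul_assoc _ (Real.exp _) (Real.exp _), ← Real.exp_add]
  congr 3
  simp only [NNReal.coe_one]
  ring

instance isProbabilityMeasure_gaussPi (m : Fin d → ℝ) : IsProbabilityMeasure (gaussPi d m) := by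
  unfold gaussPi
  infer_instance

lemma gaussPi_eq_withDensity (m : Fin d → ℝ) :
    gaussPi d m = (gaussPi d 0).withDensity (gaussShiftDensity m) := by
  have hsf (j : Fin d) : SigmaFinite ((gaussianReal 0 1).withDensity
      fun x ↦ ENNReal.ofReal (Real.exp (m j * x - m j ^ 2 / 2))) := by
    rw [← gaussianReal_eq_withDensity]
    infer_instance
  simp only [gaussPi, Pi.zero_apply, gaussianReal_eq_withDensity (m _)]
  rw [pi_withDensity fun j ↦ by fun_prop]
  simp only [← gaussShiftDensity_eq_prod]

lemma lintegral_gaussShiftDensity (m : Fin d → ℝ) :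
    ∫⁻ x, gaussShiftDensity m x ∂gaussPi d 0 = 1 := by
  rw [← setLIntegral_univ, ← withDensity_apply _ .univ, ← gaussPi_eq_withDensity, measure_univ]

lemma lintegral_gaussShiftDensity_mul (m m' : Fin d → ℝ) :
    ∫⁻ x, gaussShiftDensity m x * gaussShiftDensity m' x ∂gaussPi d 0
      = ENNReal.ofReal (Real.exp (m ⬝ᵥ m')) := by
  simp_rw [gaussShiftDensity_mul]
  rw [lintegral_const_mul _ (by fun_prop), lintegral_gaussShiftDensity, mul_one]

/-- The density of a family of independent points `x i ~ N(W i • v, I)` with respect to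
`N(0, I)`, where `θ = (v, W)` consists of the common direction `v` and the labels `W`. -/
noncomputable def labelledDensity (θ : (ι → ℝ) × (κ → ℝ)) (x : κ → ι → ℝ) : ℝ≥0∞ :=
  ∏ i, gaussShiftDensity (θ.2 i • θ.1) (x i)

@[fun_prop]
lemma measurable_labelledDensity {Ω : Type*} [MeasurableSpace Ω] {θ : Ω → (ι → ℝ) × (κ → ℝ)}
    {x : Ω → κ → ι → ℝ} (hθ : Measurable θ) (hx : Measurable x) :
    Measurable fun ω ↦ labelledDensity (θ ω) (x ω) := by
  unfold labelledDensity
  fun_prop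

lemma lintegral_labelledDensity (θ : (Fin d → ℝ) × (κ → ℝ)) :
    ∫⁻ x, labelledDensity θ x ∂(Measure.pi fun _ ↦ gaussPi d 0) = 1 := by
  unfold labelledDensity
  rw [lintegral_pi_prod fun i ↦ by fun_prop]
  exact Finset.prod_eq_one fun i _ ↦ lintegral_gaussShiftDensity _

lemma lintegral_labelledDensity_mul (θ θ' : (Fin d → ℝ) × (κ → ℝ)) :
    ∫⁻ x, labelledDensity θ x * labelledDensity θ' x ∂(Measure.pi fun _ ↦ gaussPi d 0)
      = ENNReal.ofReal (Real.exp ((θ.1 ⬝ᵥ θ'.1) * (θ.2 ⬝ᵥ θ'.2))) := by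
  simp only [labelledDensity, ← Finset.prod_mul_distrib]
  rw [lintegral_pi_prod (f := fun i y ↦ gaussShiftDensity (θ.2 i • θ.1) y *
    gaussShiftDensity (θ'.2 i • θ'.1) y) fun i ↦ by fun_prop]
  simp_rw [lintegral_gaussShiftDensity_mul]
  rw [← ofReal_exp_sum, dotProduct.eq_1 θ.2, Finset.mul_sum]
  simp only [smul_dotProduct, dotProduct_smul, smul_eq_mul]
  congr 2
  exact Finset.sum_congr rfl fun i _ ↦ by ring

lemma measurable_gaussPi_smul (v : Fin d → ℝ) : Measurable fun w : ℝ ↦ gaussPi d (w • v) := by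
  simp_rw [gaussPi_eq_withDensity (_ • v)]
  fun_prop

lemma bind_gaussPi_smul {ν : Measure ℝ} [SFinite ν] (v : Fin d → ℝ) :
    ν.bind (fun w ↦ gaussPi d (w • v))
      = (gaussPi d 0).withDensity fun y ↦ ∫⁻ w, gaussShiftDensity (w • v) y ∂ν := by
  simp_rw [gaussPi_eq_withDensity (_ • v)]
  exact bind_withDensity (by fun_prop)

lemma bind_pi_bind_gaussPi_smul {V : Measure (Fin d → ℝ)} [SFinite V] {ν : Measure ℝ}
    [IsProbabilityMeasure ν] :
    V.bind (fun v ↦ Measure.pi fun _ : κ ↦ ν.bind fun w ↦ gaussPi d (w • v))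
      = (Measure.pi fun _ ↦ gaussPi d 0).withDensity
        fun x ↦ ∫⁻ θ, labelledDensity θ x ∂V.prod (Measure.pi fun _ ↦ ν) := by
  have hpi (v : Fin d → ℝ) : Measure.pi (fun _ : κ ↦ ν.bind fun w ↦ gaussPi d (w • v))
      = (Measure.pi fun _ ↦ gaussPi d 0).withDensity
        fun x ↦ ∫⁻ W, labelledDensity (v, W) x ∂Measure.pi fun _ ↦ ν := by
    have hmeas : Measurable fun y ↦ ∫⁻ w, gaussShiftDensity (w • v) y ∂ν := by
      fun_prop
    have hfin : IsFiniteMeasure ((gaussPi d 0).withDensity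
        fun y ↦ ∫⁻ w, gaussShiftDensity (w • v) y ∂ν) := by
      refine isFiniteMeasure_withDensity ?_
      rw [lintegral_lintegral_swap (by fun_prop)]
      simp [lintegral_gaussShiftDensity]
    rw [bind_gaussPi_smul, pi_withDensity fun _ ↦ hmeas]
    congr 1
    ext x
    exact (lintegral_pi_prod fun i ↦ by fun_prop).symm
  simp_rw [hpi]
  rw [bind_withDensity]
  · congr 1
    ext x
    rw [lintegral_prod _ (by fun_prop)]
  · fun_prop

end GaussianShift

section GaussianChaos

variable {ι : Type*} [Fintype ι] {τ : ℝ≥0}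

lemma lintegral_exp_mul_sq_gaussianReal_one {a : ℝ} (ha : 2 * a < 1) :
    ∫⁻ x, ENNReal.ofReal (Real.exp (a * x ^ 2)) ∂gaussianReal 0 1
      = ENNReal.ofReal (√(1 - 2 * a))⁻¹ := by
  have hb : 0 < 1 / 2 - a := by linarith
  have hdensity (x : ℝ) : (gaussianPDF 0 1 * fun x ↦ ENNReal.ofReal (Real.exp (a * x ^ 2))) x
      = ENNReal.ofReal ((√(2 * Real.pi))⁻¹ * Real.exp (-(1 / 2 - a) * x ^ 2)) := by
    simp only [Pi.mul_apply, gaussianPDF, gaussianPDFReal, NNReal.coe_one, sub_zero, mul_one]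
    rw [← ENNReal.ofReal_mul (by positivity), mul_assoc, ← Real.exp_add]
    ring_nf
  rw [gaussianReal_of_var_ne_zero _ one_ne_zero,
    lintegral_withDensity_eq_lintegral_mul _ (measurable_gaussianPDF 0 1) (by fun_prop)]
  simp_rw [hdensity]
  rw [← ofReal_integral_eq_lintegral_ofReal ((integrable_exp_neg_mul_sq hb).const_mul _)
    (.of_forall fun x ↦ by positivity), integral_const_mul, integral_gaussian,
    ← Real.sqrt_inv, ← Real.sqrt_inv, ← Real.sqrt_mul (by positivity)]
  congr 2
  have : 1 - 2 * a ≠ 0 := by linarith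
  field_simp

lemma lintegral_exp_mul_sq_gaussianReal {a : ℝ} (ha : 2 * a * τ < 1) :
    ∫⁻ x, ENNReal.ofReal (Real.exp (a * x ^ 2)) ∂gaussianReal 0 τ
      = ENNReal.ofReal (√(1 - 2 * a * τ))⁻¹ := by
  have hmap : gaussianReal 0 τ = (gaussianReal 0 1).map fun x ↦ √τ * x := by
    rw [gaussianReal_map_const_mul, mul_zero, mul_one]
    congr
    exact NNReal.eq (Real.sq_sqrt τ.coe_nonneg).symm
  rw [hmap, lintegral_map (by fun_prop) (by fun_prop)]
  simp only [mul_pow, Real.sq_sqrt τ.coe_nonneg, ← mul_assoc]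
  rw [lintegral_exp_mul_sq_gaussianReal_one (by linarith), mul_assoc 2 a]

lemma map_dotProduct_pi_gaussianReal (v : ι → ℝ) :
    (Measure.pi fun _ ↦ gaussianReal 0 τ).map (fun x ↦ v ⬝ᵥ x)
      = gaussianReal 0 ((v ⬝ᵥ v).toNNReal * τ) := by
  set P := Measure.pi fun _ : ι ↦ gaussianReal 0 τ
  have hmap (i : ι) : P.map (fun x ↦ x i) = gaussianReal 0 τ :=
    (measurePreserving_eval (fun _ ↦ gaussianReal 0 τ) i).map_eq
  have hcoord (i : ι) : HasGaussianLaw (fun x ↦ v i * x i) P := by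
    refine HasGaussianLaw.map_of_measurable (X := fun x : ι → ℝ ↦ x i)
      (v i • ContinuousLinearMap.id ℝ ℝ) ⟨by rw [hmap]; infer_instance⟩ (by fun_prop)
  have hgauss : HasGaussianLaw (fun x ↦ v ⬝ᵥ x) P :=
    (iIndepFun_pi (X := fun i y ↦ v i * y) fun i ↦ by fun_prop).hasGaussianLaw_fun_sum hcoord
  have hmean : P[fun x ↦ v ⬝ᵥ x] = 0 := by
    simp only [dotProduct]
    rw [integral_finsetSum _ fun i _ ↦ (hcoord i).integrable]
    refine Finset.sum_eq_zero fun i _ ↦ ?_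
    have hi : ∫ x, x i ∂P = ∫ y, y ∂gaussianReal 0 τ :=
      integral_comp_eval (μ := fun _ ↦ gaussianReal 0 τ) (f := fun y : ℝ ↦ y) (by fun_prop)
    rw [integral_const_mul, hi, integral_id_gaussianReal, mul_zero]
  have hvar : Var[fun x ↦ v ⬝ᵥ x; P] = (v ⬝ᵥ v) * τ := calc
    Var[fun x ↦ v ⬝ᵥ x; P] = Var[∑ i, fun x : ι → ℝ ↦ v i * x i; P] := by
      congr 1
      ext x
      rw [dotProduct, Finset.sum_apply]
    _ = ∑ i, Var[fun y ↦ v i * y; gaussianReal 0 τ] :=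
      variance_sum_pi fun i ↦ (memLp_id_gaussianReal 2).const_mul _
    _ = ∑ i, v i * v i * τ := by
      refine Finset.sum_congr rfl fun i _ ↦ ?_
      rw [variance_const_mul _ fun y ↦ y, variance_fun_id_gaussianReal, sq]
    _ = (v ⬝ᵥ v) * τ := (Finset.sum_mul _ _ _).symm
  rw [hgauss.map_eq_gaussianReal, hmean, hvar, Real.toNNReal_mul (dotProduct_self_nonneg v),
    Real.toNNReal_coe]

lemma inv_sqrt_one_sub_le {y : ℝ} (h0 : 0 ≤ y) (h1 : y ≤ 1 / 2) : (√(1 - y))⁻¹ ≤ 1 + y := by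
  rw [← Real.sqrt_inv, Real.sqrt_le_left (by linarith), inv_le_iff_one_le_mul₀ (by linarith)]
  have hcubic : 0 ≤ y * (1 - y - y ^ 2) := mul_nonneg h0 (by nlinarith)
  linear_combination hcubic

lemma lintegral_exp_mul_dotProduct_sq_le (v : ι → ℝ) {a : ℝ} (ha : 0 ≤ a)
    (hav : a * (v ⬝ᵥ v) * τ ≤ 1 / 4) :
    ∫⁻ x, ENNReal.ofReal (Real.exp (a * (v ⬝ᵥ x) ^ 2)) ∂(Measure.pi fun _ ↦ gaussianReal 0 τ)
      ≤ ENNReal.ofReal (1 + 2 * (a * (v ⬝ᵥ v) * τ)) := by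
  have hvar : 2 * a * ((v ⬝ᵥ v).toNNReal * τ : ℝ≥0) = 2 * (a * (v ⬝ᵥ v) * τ) := by
    rw [NNReal.coe_mul, Real.coe_toNNReal _ (dotProduct_self_nonneg v)]
    ring
  have hv := dotProduct_self_nonneg v
  rw [← lintegral_map (f := fun y ↦ ENNReal.ofReal (Real.exp (a * y ^ 2))) (by fun_prop)
    (by fun_prop), map_dotProduct_pi_gaussianReal, lintegral_exp_mul_sq_gaussianReal (by linarith),
    hvar]
  exact ENNReal.ofReal_le_ofReal (inv_sqrt_one_sub_le (by positivity) (by linarith))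

end GaussianChaos

section Labels

variable {κ : Type*} [Fintype κ] {ν : Measure ℝ} [IsProbabilityMeasure ν] {B t : ℝ}

lemma integrable_sq_of_abs_le {Ω : Type*} [MeasurableSpace Ω] {P : Measure Ω} [IsFiniteMeasure P]
    {X : Ω → ℝ} (hX : AEStronglyMeasurable X P) (hXB : ∀ᵐ ω ∂P, |X ω| ≤ B) :
    Integrable (fun ω ↦ X ω ^ 2) P := by
  refine .of_bound (hX.pow 2) (B ^ 2) ?_
  filter_upwards [hXB] with ω hω
  rw [norm_pow]
  exact pow_le_pow_left₀ (norm_nonneg _) hω 2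

lemma lintegral_exp_mul_le_of_abs_le {Ω : Type*} [MeasurableSpace Ω] {P : Measure Ω}
    [IsProbabilityMeasure P] {X : Ω → ℝ} (hX : AEStronglyMeasurable X P)
    (hXB : ∀ᵐ ω ∂P, |X ω| ≤ B) (hX0 : ∫ ω, X ω ∂P = 0) (ht : |t| * B ≤ 1) :
    ∫⁻ ω, ENNReal.ofReal (Real.exp (t * X ω)) ∂P
      ≤ ENNReal.ofReal (Real.exp (t ^ 2 * ∫ ω, X ω ^ 2 ∂P)) := by
  have hint : Integrable X P := .of_bound hX B hXB
  have hint_sq := integrable_sq_of_abs_le hX hXB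
  have hint_lin : Integrable (fun ω ↦ 1 + t * X ω) P := (integrable_const 1).add (hint.const_mul t)
  have hexp_le : ∀ᵐ ω ∂P, Real.exp (t * X ω) ≤ 1 + t * X ω + t ^ 2 * X ω ^ 2 := by
    filter_upwards [hXB] with ω hω
    have htX : |t * X ω| ≤ 1 := by
      rw [abs_mul]
      exact (mul_le_mul_of_nonneg_left hω (abs_nonneg t)).trans ht
    have htaylor := (abs_le.1 (Real.abs_exp_sub_one_sub_id_le htX)).2
    linear_combination htaylor
  calc ∫⁻ ω, ENNReal.ofReal (Real.exp (t * X ω)) ∂P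
      ≤ ∫⁻ ω, ENNReal.ofReal (1 + t * X ω + t ^ 2 * X ω ^ 2) ∂P :=
        lintegral_mono_ae <| hexp_le.mono fun ω hω ↦ ENNReal.ofReal_le_ofReal hω
    _ = ENNReal.ofReal (∫ ω, 1 + t * X ω + t ^ 2 * X ω ^ 2 ∂P) :=
        (ofReal_integral_eq_lintegral_ofReal (hint_lin.add (hint_sq.const_mul _))
          (hexp_le.mono fun ω hω ↦ (Real.exp_pos _).le.trans hω)).symm
    _ = ENNReal.ofReal (t ^ 2 * ∫ ω, X ω ^ 2 ∂P + 1) := by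
        rw [integral_add hint_lin (hint_sq.const_mul _),
          integral_add (integrable_const 1) (hint.const_mul t), integral_const_mul,
          integral_const_mul, hX0, integral_const, probReal_univ, one_smul, mul_zero, add_zero,
          add_comm]
    _ ≤ ENNReal.ofReal (Real.exp (t ^ 2 * ∫ ω, X ω ^ 2 ∂P)) :=
        ENNReal.ofReal_le_ofReal (Real.add_one_le_exp _)

lemma integral_sq_le_sq (hB : ∀ᵐ w ∂ν, |w| ≤ B) : ∫ w, w ^ 2 ∂ν ≤ B ^ 2 := by
  calc ∫ w, w ^ 2 ∂ν ≤ ∫ _, B ^ 2 ∂ν := by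
        refine integral_mono_of_nonneg (.of_forall fun w ↦ sq_nonneg w) (integrable_const _) ?_
        filter_upwards [hB] with w hw
        exact sq_le_sq' (abs_le.1 hw).1 (abs_le.1 hw).2
    _ = B ^ 2 := by simp

lemma lintegral_lintegral_exp_mul_le (hB : ∀ᵐ w ∂ν, |w| ≤ B) (h0 : ∫ w, w ∂ν = 0)
    (ht : |t| * B ^ 2 ≤ 1) :
    ∫⁻ w, ∫⁻ w', ENNReal.ofReal (Real.exp (t * (w * w'))) ∂ν ∂ν
      ≤ ENNReal.ofReal (Real.exp (t ^ 2 * (∫ w, w ^ 2 ∂ν) ^ 2)) := by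
  have hbound : ∀ᵐ p ∂ν.prod ν, |p.1 * p.2| ≤ B ^ 2 := by
    filter_upwards [Measure.quasiMeasurePreserving_fst.ae hB,
      Measure.quasiMeasurePreserving_snd.ae hB] with p hp₁ hp₂
    rw [abs_mul, sq]
    exact mul_le_mul hp₁ hp₂ (abs_nonneg _) ((abs_nonneg _).trans hp₁)
  have hmean : ∫ p, p.1 * p.2 ∂ν.prod ν = 0 := by
    rw [integral_prod_mul (fun w ↦ w) (fun w ↦ w), h0, zero_mul]
  have hvar : ∫ p, (p.1 * p.2) ^ 2 ∂ν.prod ν = (∫ w, w ^ 2 ∂ν) ^ 2 := by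
    simp_rw [mul_pow]
    rw [integral_prod_mul (fun w ↦ w ^ 2) (fun w ↦ w ^ 2), sq (∫ w, w ^ 2 ∂ν)]
  rw [← hvar, ← lintegral_prod (fun p ↦ ENNReal.ofReal (Real.exp (t * (p.1 * p.2))))
    (by fun_prop)]
  exact lintegral_exp_mul_le_of_abs_le (by fun_prop) hbound hmean ht

lemma lintegral_lintegral_exp_mul_dotProduct :
    ∫⁻ W, ∫⁻ W', ENNReal.ofReal (Real.exp (t * (W ⬝ᵥ W')))
      ∂(Measure.pi fun _ : κ ↦ ν) ∂(Measure.pi fun _ : κ ↦ ν)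
      = (∫⁻ w, ∫⁻ w', ENNReal.ofReal (Real.exp (t * (w * w'))) ∂ν ∂ν) ^ Fintype.card κ := by
  have hmeas : Measurable fun w ↦ ∫⁻ w', ENNReal.ofReal (Real.exp (t * (w * w'))) ∂ν := by
    fun_prop
  have hinner (W : κ → ℝ) :
      ∫⁻ W', ENNReal.ofReal (Real.exp (t * (W ⬝ᵥ W'))) ∂(Measure.pi fun _ : κ ↦ ν)
        = ∏ i, ∫⁻ w', ENNReal.ofReal (Real.exp (t * (W i * w'))) ∂ν := by
    simp_rw [dotProduct, Finset.mul_sum, ofReal_exp_sum]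
    exact lintegral_pi_prod (f := fun i w' ↦ ENNReal.ofReal (Real.exp (t * (W i * w'))))
      fun i ↦ by fun_prop
  simp_rw [hinner]
  rw [lintegral_pi_prod fun _ ↦ hmeas, Finset.prod_const, Finset.card_univ]

lemma setLIntegral_setLIntegral_le {Θ : Type*} [MeasurableSpace Θ] {μ : Measure Θ}
    [IsProbabilityMeasure μ] {F : Θ → Θ → ℝ≥0∞} {G : Set Θ} (hG : MeasurableSet G) {C : ℝ≥0∞}
    (hF : ∀ x ∈ G, ∀ y ∈ G, F x y ≤ C) : ∫⁻ x in G, ∫⁻ y in G, F x y ∂μ ∂μ ≤ C := by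
  calc ∫⁻ x in G, ∫⁻ y in G, F x y ∂μ ∂μ ≤ ∫⁻ _ in G, ∫⁻ _ in G, C ∂μ ∂μ :=
        setLIntegral_mono' hG fun x hx ↦ setLIntegral_mono' hG (hF x hx)
    _ ≤ ∫⁻ _, ∫⁻ _, C ∂μ ∂μ :=
        lintegral_mono' Measure.restrict_le_self
          fun _ ↦ lintegral_mono' Measure.restrict_le_self le_rfl
    _ = C := by simp

-- For `|t| B² ≤ 1` the centred labels make the untruncated integral quadratic in `t`; for larger
-- `t` the truncation makes the exponent at most linear, hence again quadratic, in `t`.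
lemma setLIntegral_exp_mul_dotProduct_le (hB : ∀ᵐ w ∂ν, |w| ≤ B) (h0 : ∫ w, w ∂ν = 0) {M r : ℝ}
    (hM : 1 ≤ M) (hr : r = M * (Fintype.card κ * ∫ w, w ^ 2 ∂ν)) :
    ∫⁻ W in sqBall κ r, ∫⁻ W' in sqBall κ r, ENNReal.ofReal (Real.exp (t * (W ⬝ᵥ W')))
        ∂(Measure.pi fun _ ↦ ν) ∂(Measure.pi fun _ ↦ ν)
      ≤ ENNReal.ofReal (Real.exp (r * B ^ 2 * t ^ 2)) := by
  have hσ_nonneg : 0 ≤ ∫ w, w ^ 2 ∂ν := integral_nonneg fun w ↦ sq_nonneg w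
  have hσ_le := integral_sq_le_sq hB
  set σsq := ∫ w, w ^ 2 ∂ν
  rcases le_or_gt (|t| * B ^ 2) 1 with ht | ht
  · calc ∫⁻ W in sqBall κ r, ∫⁻ W' in sqBall κ r, ENNReal.ofReal (Real.exp (t * (W ⬝ᵥ W')))
          ∂(Measure.pi fun _ ↦ ν) ∂(Measure.pi fun _ ↦ ν)
        ≤ ∫⁻ W, ∫⁻ W', ENNReal.ofReal (Real.exp (t * (W ⬝ᵥ W')))
          ∂(Measure.pi fun _ : κ ↦ ν) ∂(Measure.pi fun _ : κ ↦ ν) :=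
          lintegral_mono' Measure.restrict_le_self
            fun W ↦ lintegral_mono' Measure.restrict_le_self le_rfl
      _ ≤ ENNReal.ofReal (Real.exp (t ^ 2 * σsq ^ 2)) ^ Fintype.card κ := by
          rw [lintegral_lintegral_exp_mul_dotProduct]
          exact pow_le_pow_left' (lintegral_lintegral_exp_mul_le hB h0 ht) _
      _ = ENNReal.ofReal (Real.exp (1 * (Fintype.card κ * σsq) * σsq * t ^ 2)) := by
          rw [← ENNReal.ofReal_pow (Real.exp_pos _).le, ← Real.exp_nat_mul]
          ring_nf
      _ ≤ ENNReal.ofReal (Real.exp (r * B ^ 2 * t ^ 2)) := by rw [hr]; gcongr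
  · have hr_nonneg : 0 ≤ r := by rw [hr]; positivity
    refine setLIntegral_setLIntegral_le (measurableSet_sqBall _) fun W hW W' hW' ↦
      ENNReal.ofReal_le_ofReal (Real.exp_le_exp.2 ?_)
    calc t * (W ⬝ᵥ W') ≤ |t| * |W ⬝ᵥ W'| := (le_abs_self _).trans_eq (abs_mul _ _)
      _ ≤ |t| * 1 * r := by
        rw [mul_one]
        gcongr
        exact abs_dotProduct_le_of_mem_sqBall hW hW'
      _ ≤ |t| * (|t| * B ^ 2) * r := by gcongr
      _ = r * B ^ 2 * t ^ 2 := by rw [← sq_abs t]; ring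

end Labels

section LabelledMixture

variable {κ : Type*} [Fintype κ] {d : ℕ} {τ : ℝ≥0} {ν : Measure ℝ} [IsProbabilityMeasure ν]
  {B : ℝ}

lemma integrable_sq_gaussianReal : Integrable (fun x ↦ x ^ 2) (gaussianReal 0 τ) :=
  (memLp_id_gaussianReal 2).integrable_sq

lemma integral_sq_gaussianReal : ∫ x, x ^ 2 ∂gaussianReal 0 τ = τ := by
  rw [← variance_fun_id_gaussianReal (μ := 0) (v := τ),
    variance_of_integral_eq_zero (by fun_prop) integral_id_gaussianReal]

lemma setLIntegral_labelledDensity_mul_le (hB : ∀ᵐ w ∂ν, |w| ≤ B) (h0 : ∫ w, w ∂ν = 0)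
    {M r s : ℝ} (hM : 1 ≤ M) (hr : r = M * (Fintype.card κ * ∫ w, w ^ 2 ∂ν))
    (hrs : r * B ^ 2 * s * τ ≤ 1 / 4) :
    ∫⁻ θ in sqBall (Fin d) s ×ˢ sqBall κ r, ∫⁻ θ' in sqBall (Fin d) s ×ˢ sqBall κ r,
        ∫⁻ x, labelledDensity θ x * labelledDensity θ' x ∂(Measure.pi fun _ ↦ gaussPi d 0)
        ∂((Measure.pi fun _ ↦ gaussianReal 0 τ).prod (Measure.pi fun _ ↦ ν))
        ∂((Measure.pi fun _ ↦ gaussianReal 0 τ).prod (Measure.pi fun _ ↦ ν))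
      ≤ ENNReal.ofReal (1 + 2 * (r * B ^ 2 * s * τ)) := by
  have hr_nonneg : 0 ≤ r := by
    rw [hr]
    positivity
  set V := Measure.pi fun _ : Fin d ↦ gaussianReal 0 τ
  set Λ := Measure.pi fun _ : κ ↦ ν
  simp_rw [lintegral_labelledDensity_mul, ← Measure.prod_restrict]
  rw [lintegral_prod_lintegral_prod (F := fun θ θ' ↦
    ENNReal.ofReal (Real.exp ((θ.1 ⬝ᵥ θ'.1) * (θ.2 ⬝ᵥ θ'.2)))) (by fun_prop)]
  calc ∫⁻ v in sqBall (Fin d) s, ∫⁻ v' in sqBall (Fin d) s, ∫⁻ W in sqBall κ r,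
        ∫⁻ W' in sqBall κ r, ENNReal.ofReal (Real.exp ((v ⬝ᵥ v') * (W ⬝ᵥ W'))) ∂Λ ∂Λ ∂V ∂V
      ≤ ∫⁻ v in sqBall (Fin d) s, ∫⁻ v',
        ENNReal.ofReal (Real.exp (r * B ^ 2 * (v ⬝ᵥ v') ^ 2)) ∂V ∂V :=
        lintegral_mono fun v ↦ lintegral_mono' Measure.restrict_le_self fun v' ↦
          setLIntegral_exp_mul_dotProduct_le hB h0 hM hr
    _ ≤ ∫⁻ _ in sqBall (Fin d) s, ENNReal.ofReal (1 + 2 * (r * B ^ 2 * s * τ)) ∂V := by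
        refine setLIntegral_mono' (measurableSet_sqBall s) fun v hv ↦ ?_
        have hvs : r * B ^ 2 * (v ⬝ᵥ v) * τ ≤ r * B ^ 2 * s * τ := by
          gcongr
          exact hv
        refine (lintegral_exp_mul_dotProduct_sq_le v (by positivity) (hvs.trans hrs)).trans ?_
        gcongr
    _ ≤ ∫⁻ _, ENNReal.ofReal (1 + 2 * (r * B ^ 2 * s * τ)) ∂V := setLIntegral_le_lintegral _ _
    _ = ENNReal.ofReal (1 + 2 * (r * B ^ 2 * s * τ)) := by simp

lemma ofReal_one_sub_inv_sq_le_prod_sqBall (hν : Integrable (fun w ↦ w ^ 2) ν) {M : ℝ}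
    (hM : 1 ≤ M) :
    ENNReal.ofReal ((1 - M⁻¹) ^ 2)
      ≤ (Measure.pi fun _ ↦ gaussianReal 0 τ).prod (Measure.pi fun _ ↦ ν)
        (sqBall (Fin d) (M * (d * τ)) ×ˢ sqBall κ (M * (Fintype.card κ * ∫ w, w ^ 2 ∂ν))) := by
  have hM0 : 0 < M := by linarith
  have hv := one_sub_inv_le_measureReal_sqBall
    (integrable_dotProduct_self_pi (ι := Fin d) (integrable_sq_gaussianReal (τ := τ))) hM0
  have hW := one_sub_inv_le_measureReal_sqBall (integrable_dotProduct_self_pi (ι := κ) hν) hM0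
  rw [integral_dotProduct_self_pi integrable_sq_gaussianReal, integral_sq_gaussianReal,
    Fintype.card_fin] at hv
  rw [integral_dotProduct_self_pi hν] at hW
  have h1M : 0 ≤ 1 - M⁻¹ := sub_nonneg.2 (inv_le_one_of_one_le₀ hM)
  rw [Measure.prod_prod, ← ofReal_measureReal, ← ofReal_measureReal,
    ← ENNReal.ofReal_mul (by positivity), sq]
  exact ENNReal.ofReal_le_ofReal (mul_le_mul hv hW h1M (h1M.trans hv))

theorem tvDist_gaussPi_labelledMixture_le (hB : ∀ᵐ w ∂ν, |w| ≤ B) (h0 : ∫ w, w ∂ν = 0) {δ : ℝ}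
    (hδ0 : 0 < δ) (hδ1 : δ ≤ 1)
    (h : Fintype.card κ * (∫ w, w ^ 2 ∂ν) * B ^ 2 * (d * τ ^ 2) ≤ δ ^ 6 / 256) :
    tvDist (Measure.pi fun _ : κ ↦ gaussPi d 0)
      ((Measure.pi fun _ : Fin d ↦ gaussianReal 0 τ).bind fun v ↦
        Measure.pi fun _ : κ ↦ ν.bind fun w ↦ gaussPi d (w • v)) ≤ δ := by
  have hδsq : δ ^ 2 ≤ 1 := pow_le_one₀ hδ0.le hδ1
  have hν : Integrable (fun w ↦ w ^ 2) ν := integrable_sq_of_abs_le (by fun_prop) hB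
  have hM : 1 ≤ 8 / δ ^ 2 := by rw [one_le_div (by positivity)]; linarith
  set M := 8 / δ ^ 2 with hM_def
  set r := M * (Fintype.card κ * ∫ w, w ^ 2 ∂ν) with hr
  have hrs : r * B ^ 2 * (M * (d * τ)) * τ ≤ δ ^ 2 / 4 := calc
    r * B ^ 2 * (M * (d * τ)) * τ
        = M ^ 2 * (Fintype.card κ * (∫ w, w ^ 2 ∂ν) * B ^ 2 * (d * τ ^ 2)) := by ring
    _ ≤ M ^ 2 * (δ ^ 6 / 256) := by gcongr
    _ = δ ^ 2 / 4 := by rw [hM_def]; field_simp; norm_num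
  rw [bind_pi_bind_gaussPi_smul]
  refine tvDist_withDensity_mixture_le (by fun_prop) lintegral_labelledDensity
    (sqBall (Fin d) (M * (d * τ)) ×ˢ sqBall κ r) hδ0.le ?_
  calc _ ≤ 1 + ENNReal.ofReal (1 + 2 * (r * B ^ 2 * (M * (d * τ)) * τ)) := by
        gcongr
        exact setLIntegral_labelledDensity_mul_le hB h0 hM hr (by linarith)
    _ ≤ 1 + ENNReal.ofReal (1 + 2 * (δ ^ 2 / 4)) := by gcongr
    _ ≤ ENNReal.ofReal (δ ^ 2) + 2 * ENNReal.ofReal ((1 - M⁻¹) ^ 2) := by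
        rw [← ENNReal.ofReal_one, ← ENNReal.ofReal_ofNat 2, ← ENNReal.ofReal_mul zero_le_two,
          ← ENNReal.ofReal_add zero_le_one (by positivity),
          ← ENNReal.ofReal_add (by positivity) (by positivity)]
        refine ENNReal.ofReal_le_ofReal ?_
        rw [hM_def, inv_div]
        linarith [sq_nonneg (δ ^ 2 / 8)]
    _ ≤ _ := by
        gcongr
        exact ofReal_one_sub_inv_sq_le_prod_sqBall hν hM

end LabelledMixture

section Contamination

variable {ε α : ℝ}

/-- The law of the signed amplitude `w` in the contaminated mixture, whose components are
`N(w • v, I)` with `w = α` for an inlier and `w = -((1 - ε) / ε) * α` for an outlier. -/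
noncomputable def contaminationLaw (ε α : ℝ) : Measure ℝ :=
  ENNReal.ofReal (1 - ε) • Measure.dirac α +
    ENNReal.ofReal ε • Measure.dirac (-((1 - ε) / ε) * α)

lemma isProbabilityMeasure_contaminationLaw (hε0 : 0 < ε) (hε1 : ε ≤ 1) :
    IsProbabilityMeasure (contaminationLaw ε α) := by
  refine ⟨?_⟩
  simp only [contaminationLaw, Measure.add_apply, Measure.smul_apply, measure_univ, smul_eq_mul,
    mul_one]
  rw [← ENNReal.ofReal_add (sub_nonneg.2 hε1) hε0.le, sub_add_cancel, ENNReal.ofReal_one]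

lemma bind_contaminationLaw {Ω : Type*} [MeasurableSpace Ω] {f : ℝ → Measure Ω}
    (hf : Measurable f) :
    (contaminationLaw ε α).bind f
      = ENNReal.ofReal (1 - ε) • f α + ENNReal.ofReal ε • f (-((1 - ε) / ε) * α) := by
  ext A hA
  have hfA : Measurable fun w ↦ f w A := (Measure.measurable_coe hA).comp hf
  rw [Measure.bind_apply hA hf.aemeasurable, contaminationLaw, lintegral_add_measure,
    lintegral_smul_measure, lintegral_smul_measure, lintegral_dirac' _ hfA, lintegral_dirac' _ hfA]
  rfl

lemma integral_contaminationLaw (hε0 : 0 < ε) (hε1 : ε ≤ 1) (f : ℝ → ℝ) :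
    ∫ w, f w ∂contaminationLaw ε α
      = (1 - ε) * f α + ε * f (-((1 - ε) / ε) * α) := by
  rw [contaminationLaw, integral_add_measure
    ((integrable_dirac (by simp)).smul_measure ENNReal.ofReal_ne_top)
    ((integrable_dirac (by simp)).smul_measure ENNReal.ofReal_ne_top),
    integral_smul_measure, integral_smul_measure, integral_dirac, integral_dirac,
    ENNReal.toReal_ofReal (sub_nonneg.2 hε1), ENNReal.toReal_ofReal hε0.le, smul_eq_mul,
    smul_eq_mul]

lemma integral_id_contaminationLaw (hε0 : 0 < ε) (hε1 : ε ≤ 1) :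
    ∫ w, w ∂contaminationLaw ε α = 0 := by
  rw [integral_contaminationLaw hε0 hε1 fun w ↦ w]
  field_simp
  ring

lemma integral_sq_contaminationLaw (hε0 : 0 < ε) (hε1 : ε ≤ 1) :
    ∫ w, w ^ 2 ∂contaminationLaw ε α = (1 - ε) * α ^ 2 / ε := by
  rw [integral_contaminationLaw hε0 hε1 fun w ↦ w ^ 2]
  field_simp
  ring

lemma ae_abs_le_contaminationLaw (hε0 : 0 < ε) (hε1 : ε ≤ 1) :
    ∀ᵐ w ∂contaminationLaw ε α, |w| ≤ |α| / ε := by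
  have hinlier : |α| ≤ |α| / ε := le_div_self (abs_nonneg α) hε0 hε1
  have houtlier : |-((1 - ε) / ε) * α| ≤ |α| / ε := by
    rw [abs_mul, abs_neg, abs_of_nonneg (div_nonneg (sub_nonneg.2 hε1) hε0.le), div_mul_eq_mul_div]
    gcongr
    exact mul_le_of_le_one_left (abs_nonneg α) (by linarith)
  refine ae_add_measure_iff.2 ⟨Measure.ae_smul_measure ?_ _, Measure.ae_smul_measure ?_ _⟩
  · rwa [ae_dirac_iff (measurableSet_le (by fun_prop) measurable_const)]
  · rwa [ae_dirac_iff (measurableSet_le (by fun_prop) measurable_const)]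

end Contamination

theorem huber_lower_bound_general {d n : ℕ} {ε α δ : ℝ} (hd : 0 < d) (hε0 : 0 < ε) (hε1 : ε ≤ 1)
    (hδ0 : 0 < δ) (hδ1 : δ ≤ 1) (hn : n * α ^ 4 ≤ δ ^ 6 / 256 * d * ε ^ 3) :
    tvDist
      (Measure.pi fun _ : Fin n => gaussPi d 0)
      ((Measure.pi fun _ : Fin d => gaussianReal 0 (Real.toNNReal (1 / d))).bind
        fun v => Measure.pi fun _ : Fin n =>
          ENNReal.ofReal (1 - ε) • gaussPi d (α • v) +
            ENNReal.ofReal ε • gaussPi d ((-((1 - ε) / ε) * α) • v))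
      ≤ δ := by
  have hprob := isProbabilityMeasure_contaminationLaw (α := α) hε0 hε1
  simp_rw [← bind_contaminationLaw (measurable_gaussPi_smul _)]
  refine tvDist_gaussPi_labelledMixture_le (ae_abs_le_contaminationLaw hε0 hε1)
    (integral_id_contaminationLaw hε0 hε1) hδ0 hδ1 ?_
  rw [Fintype.card_fin, integral_sq_contaminationLaw hε0 hε1, div_pow, sq_abs,
    Real.coe_toNNReal _ (by positivity)]
  calc n * ((1 - ε) * α ^ 2 / ε) * (α ^ 2 / ε ^ 2) * (d * (1 / d) ^ 2)
      = (1 - ε) * (n * α ^ 4 / (d * ε ^ 3)) := by field_simp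
    _ ≤ n * α ^ 4 / (d * ε ^ 3) := mul_le_of_le_one_left (by positivity) (by linarith)
    _ ≤ δ ^ 6 / 256 := by rwa [div_le_iff₀ (by positivity), ← mul_assoc]

/-- Let `D₀ = N(0, I_d)^⊗n` and let `D₁` be obtained by drawing
`v ~ N(0, (1/d)·I_d)` and then, conditionally on `v`, drawing `X₁, …, Xₙ` i.i.d. from the
mixture `(1−ε)·N(αv, I_d) + ε·N(−((1−ε)/ε)·αv, I_d)`. There is an absolute constant `c > 0`
such that if `n = c·dε³/α⁴`, `α ≥ ε`, and `c·dε³/α⁴ ≥ √d/α²`, then `d_TV(D₀, D₁) ≤ 0.1`. -/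
theorem huber_lower_bound : ∃ c : ℝ, 0 < c ∧
    ∀ (d n : ℕ) (ε α : ℝ), 0 < d → 0 < n → 0 < ε → ε ≤ α → α ≤ 1 →
      (∃ k : ℕ, (k : ℝ) = ε * n) →
      (n : ℝ) = c * d * ε ^ 3 / α ^ 4 →
      c * d * ε ^ 3 / α ^ 4 ≥ Real.sqrt d / α ^ 2 →
      tvDist
        (Measure.pi fun _ : Fin n => gaussPi d 0)
        ((Measure.pi fun _ : Fin d => gaussianReal 0 (Real.toNNReal (1 / d))).bind
          fun v => Measure.pi fun _ : Fin n =>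
            ENNReal.ofReal (1 - ε) • gaussPi d (α • v) +
              ENNReal.ofReal ε • gaussPi d ((-((1 - ε) / ε) * α) • v))
        ≤ 0.1 := by
  refine ⟨0.1 ^ 6 / 256, by norm_num, fun d n ε α hd _ hε hεα hα _ hn _ ↦
    huber_lower_bound_general hd hε (hεα.trans hα) (by norm_num) (by norm_num) ?_⟩
  rw [hn, div_mul_cancel₀ _ (pow_pos (hε.trans_le hεα) 4).ne']
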